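/- The Alfvén eigenvectors of the primitive-variable MHD matrix: under the stated hypotheses, the vector r₂ = (0, 0, −β3, β2, 0, 0, −√ρ β1 β3, √ρ β1 β2)ᵀ satisfies D^x r₂ = (u − c_a) r₂, and the vector r₇ = (0, 0, β3, −β2, 0, 0, −√ρ β1 β3, √ρ β1 β2)ᵀ satisfies D^x r₇ = (u + c_a) r₇. -/

import Mathlib

/-!
A perturbation of the velocity and the magnetic field within the `y`-`z` plane whose magnetic part
is orthogonal to `(b2, b3)` leaves the magnetic pressure unchanged to first order. On such
perturbations the matrix therefore acts only through the advection speed `u` and the magnetic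
tension, which couples each velocity component to the magnetic component in the same direction by
the block `[[u, -b1/ρ], [-b1, u]]`. The eigenvalues of this block are `u ± b1/√ρ`; the factor
`sign b1` in the magnetic part turns them into `u ± c_a` with `c_a = |b1|/√ρ`.
-/

section Field

open Matrix

variable {K : Type*} [Field K]

/-- The matrix `D^x` of the ideal MHD equations, linearized in the `x` direction in the primitive
variables `(ρ, u, v, w, p, b1, b2, b3)`. It does not depend on `v` and `w`. -/
def mhdMatrix (γ ρ p u b1 b2 b3 : K) : Matrix (Fin 8) (Fin 8) K :=
  !![u, ρ, 0, 0, 0, 0, 0, 0;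
     0, u, 0, 0, 1 / ρ, 0, b2 / ρ, b3 / ρ;
     0, 0, u, 0, 0, 0, -b1 / ρ, 0;
     0, 0, 0, u, 0, 0, 0, -b1 / ρ;
     0, γ * p, 0, 0, u, 0, 0, 0;
     0, 0, 0, 0, 0, u, 0, 0;
     0, b2, -b1, 0, 0, 0, u, 0;
     0, b3, 0, -b1, 0, 0, 0, u]

/-- The state perturbation with transverse velocity `(v2, v3)` and transverse magnetic field
`(m2, m3)`, all other components being zero; Alfvén waves are of this form. -/
def transversePerturbation (v2 v3 m2 m3 : K) : Fin 8 → K :=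
  ![0, 0, v2, v3, 0, 0, m2, m3]

theorem smul_transversePerturbation (c v2 v3 m2 m3 : K) :
    c • transversePerturbation v2 v3 m2 m3 =
      transversePerturbation (c * v2) (c * v3) (c * m2) (c * m3) := by
  simp [transversePerturbation]

theorem mhdMatrix_mulVec_transversePerturbation (γ ρ p u b1 : K) {b2 b3 m2 m3 : K} (v2 v3 : K)
    (horth : b2 * m2 + b3 * m3 = 0) :
    mhdMatrix γ ρ p u b1 b2 b3 *ᵥ transversePerturbation v2 v3 m2 m3 =
      transversePerturbation (u * v2 - b1 / ρ * m2) (u * v3 - b1 / ρ * m3)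
        (u * m2 - b1 * v2) (u * m3 - b1 * v3) := by
  have hpressure : b2 / ρ * m2 + b3 / ρ * m3 = 0 := by
    linear_combination horth / ρ
  ext i
  fin_cases i <;>
    simp [mhdMatrix, transversePerturbation, mulVec, dotProduct, Fin.sum_univ_succ, hpressure] <;>
    ring

theorem mhdMatrix_mulVec_transversePerturbation_eq_smul {ρ b1 b2 b3 c v2 v3 m2 m3 : K}
    (γ p u : K) (hρ : ρ ≠ 0) (horth : b2 * m2 + b3 * m3 = 0)
    (hv2 : b1 * m2 = -(ρ * c * v2)) (hv3 : b1 * m3 = -(ρ * c * v3))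
    (hm2 : b1 * v2 = -(c * m2)) (hm3 : b1 * v3 = -(c * m3)) :
    mhdMatrix γ ρ p u b1 b2 b3 *ᵥ transversePerturbation v2 v3 m2 m3 =
      (u + c) • transversePerturbation v2 v3 m2 m3 := by
  have tension {v m : K} (h : b1 * m = -(ρ * c * v)) : b1 / ρ * m = -(c * v) := by
    rw [div_mul_eq_mul_div, h, div_eq_iff hρ]
    ring
  rw [mhdMatrix_mulVec_transversePerturbation γ ρ p u b1 v2 v3 horth,
    smul_transversePerturbation, tension hv2, tension hv3, hm2, hm3]
  simp only [sub_neg_eq_add, add_mul]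

/-- Here `c` plays the role of the Alfvén speed, `m` of `√ρ * β1`, and `(n2, n3)` is any vector
parallel to the transverse magnetic field. -/
theorem mhd_alfven_eigenvectors_general {ρ b1 b2 b3 c m n2 n3 : K} (γ p u : K) (hρ : ρ ≠ 0)
    (hcm : c * m = b1) (hbm : b1 * m = ρ * c) (hn : n2 * b3 = n3 * b2) :
    mhdMatrix γ ρ p u b1 b2 b3 *ᵥ transversePerturbation (-n3) n2 (-(m * n3)) (m * n2) =
      (u - c) • transversePerturbation (-n3) n2 (-(m * n3)) (m * n2) ∧
    mhdMatrix γ ρ p u b1 b2 b3 *ᵥ transversePerturbation n3 (-n2) (-(m * n3)) (m * n2) =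
      (u + c) • transversePerturbation n3 (-n2) (-(m * n3)) (m * n2) := by
  have horth : b2 * -(m * n3) + b3 * (m * n2) = 0 := by linear_combination m * hn
  rw [sub_eq_add_neg]
  constructor <;> apply mhdMatrix_mulVec_transversePerturbation_eq_smul γ p u hρ horth
  · linear_combination -n3 * hbm
  · linear_combination n2 * hbm
  · linear_combination n3 * hcm
  · linear_combination -n2 * hcm
  · linear_combination -n3 * hbm
  · linear_combination n2 * hbm
  · linear_combination -n3 * hcm
  · linear_combination n2 * hcm

end Field

theorem abs_mul_realSign (x : ℝ) : |x| * Real.sign x = x := by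
  rcases lt_trichotomy x 0 with hneg | rfl | hpos
  · rw [abs_of_neg hneg, Real.sign_of_neg hneg, neg_mul_neg, mul_one]
  · rw [abs_zero, zero_mul]
  · rw [abs_of_pos hpos, Real.sign_of_pos hpos, mul_one]

theorem self_mul_realSign (x : ℝ) : x * Real.sign x = |x| := by
  rcases lt_trichotomy x 0 with hneg | rfl | hpos
  · rw [abs_of_neg hneg, Real.sign_of_neg hneg, mul_neg_one]
  · rw [abs_zero, zero_mul]
  · rw [abs_of_pos hpos, Real.sign_of_pos hpos, mul_one]

theorem sqrt_sq_div_mul_sqrt {ρ : ℝ} (hρ : 0 < ρ) (b : ℝ) : √(b ^ 2 / ρ) * √ρ = |b| := by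
  rw [← Real.sqrt_mul' _ hρ.le, div_mul_cancel₀ _ hρ.ne', Real.sqrt_sq_eq_abs]

theorem sqrt_sq_div_mul_sqrt_mul_sign {ρ : ℝ} (hρ : 0 < ρ) (b : ℝ) :
    √(b ^ 2 / ρ) * (√ρ * Real.sign b) = b := by
  rw [← mul_assoc, sqrt_sq_div_mul_sqrt hρ, abs_mul_realSign]

theorem mul_sqrt_mul_sign {ρ : ℝ} (hρ : 0 < ρ) (b : ℝ) :
    b * (√ρ * Real.sign b) = ρ * √(b ^ 2 / ρ) :=
  calc
    b * (√ρ * Real.sign b) = √ρ * |b| := by rw [mul_left_comm, self_mul_realSign]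
    _ = √ρ * √ρ * √(b ^ 2 / ρ) := by rw [← sqrt_sq_div_mul_sqrt hρ b]; ring
    _ = ρ * √(b ^ 2 / ρ) := by rw [Real.mul_self_sqrt hρ.le]

/-- The Alfvén eigenvectors of the primitive-variable MHD matrix `D^x`:
`D^x r₂ = (u − c_a) r₂` and `D^x r₇ = (u + c_a) r₇`. -/
theorem mhd_alfven_eigenvectors
    (γ ρ p u v w b1 b2 b3 ca β1 β2 β3 : ℝ)
    (hγ : 1 < γ) (hρ : 0 < ρ) (hp : 0 < p) (hb : b2 ^ 2 + b3 ^ 2 > 0)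
    (Dx : Matrix (Fin 8) (Fin 8) ℝ)
    (hDx : Dx = !![u, ρ, 0, 0, 0, 0, 0, 0;
                   0, u, 0, 0, 1/ρ, 0, b2/ρ, b3/ρ;
                   0, 0, u, 0, 0, 0, -b1/ρ, 0;
                   0, 0, 0, u, 0, 0, 0, -b1/ρ;
                   0, γ*p, 0, 0, u, 0, 0, 0;
                   0, 0, 0, 0, 0, u, 0, 0;
                   0, b2, -b1, 0, 0, 0, u, 0;
                   0, b3, 0, -b1, 0, 0, 0, u])
    (hca : ca = Real.sqrt (b1 ^ 2 / ρ))
    (hβ1 : β1 = Real.sign b1)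
    (hβ2 : β2 = b2 / Real.sqrt (b2 ^ 2 + b3 ^ 2))
    (hβ3 : β3 = b3 / Real.sqrt (b2 ^ 2 + b3 ^ 2)) :
    Dx.mulVec ![0, 0, -β3, β2, 0, 0, -(Real.sqrt ρ * β1 * β3), Real.sqrt ρ * β1 * β2] =
      (u - ca) • ![0, 0, -β3, β2, 0, 0, -(Real.sqrt ρ * β1 * β3), Real.sqrt ρ * β1 * β2] ∧
    Dx.mulVec ![0, 0, β3, -β2, 0, 0, -(Real.sqrt ρ * β1 * β3), Real.sqrt ρ * β1 * β2] =
      (u + ca) • ![0, 0, β3, -β2, 0, 0, -(Real.sqrt ρ * β1 * β3), Real.sqrt ρ * β1 * β2] := by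
  have hparallel : β2 * b3 = β3 * b2 := by
    rw [hβ2, hβ3]
    ring
  subst hDx hca hβ1
  exact mhd_alfven_eigenvectors_general γ p u hρ.ne' (sqrt_sq_div_mul_sqrt_mul_sign hρ b1)
    (mul_sqrt_mul_sign hρ b1) hparallel
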